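/- arXiv:1409.8402 — 7 statements merged into one kernel-verified Lean document; each statement's English description precedes it below -/
import Mathlib

section
/- Let θ_i, θ_j > 0 and D > 0, and define f(x) = θ_j(2^x − 1) + θ_i(2^{D−x} − 1) for x ∈ [0, D]. Set L = log₂(θ_i/θ_j). Then f attains its minimum over the interval [0, D] at the point x̂ given by: x̂ = 0 if L < −D; x̂ = (D + L)/2 if −D ≤ L < D; and x̂ = D if L ≥ D. -/
/-!
The cost is a convex function of `x`, and `θi = θj * 2 ^ L` makes the reflection `x ↦ D + L - x`
exchange its two exponential terms. A convex function that is symmetric about a point `m` does not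
decrease as one moves away from `m`, so on an interval it is smallest at the point nearest to `m`.
For `m = (D + L) / 2` and the interval `[0, D]` this nearest point is `x̂`.
-/

open Set

lemma abs_max_min_sub_le {α : Type*} [AddCommGroup α] [LinearOrder α] [IsOrderedAddMonoid α]
    {a b x : α} (hx : x ∈ Icc a b) (m : α) : |max a (min b m) - m| ≤ |x - m| := by
  obtain ⟨hax, hxb⟩ := hx
  rcases le_total m x with hmx | hxm
  · rw [min_eq_right (hmx.trans hxb), abs_of_nonneg (sub_nonneg.2 (le_max_right a m)),
      abs_of_nonneg (sub_nonneg.2 hmx)]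
    exact sub_le_sub_right (max_le hax hmx) m
  · have hx_le : x ≤ min b m := le_min hxb hxm
    rw [max_eq_right (hax.trans hx_le), abs_sub_comm, abs_sub_comm x,
      abs_of_nonneg (sub_nonneg.2 (min_le_right b m)), abs_of_nonneg (sub_nonneg.2 hxm)]
    exact sub_le_sub_left hx_le m

lemma max_zero_min_half_add_eq_ite {K : Type*} [Field K] [LinearOrder K] [IsStrictOrderedRing K]
    {D : K} (hD : 0 ≤ D) (L : K) :
    max 0 (min D ((D + L) / 2)) = if L < -D then 0 else if L < D then (D + L) / 2 else D := by
  split_ifs with hlow hhigh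
  · exact max_eq_left (min_le_of_right_le (by linarith))
  · rw [min_eq_right (by linarith), max_eq_right (by linarith)]
  · rw [min_eq_left (by linarith), max_eq_right hD]

lemma mem_uIcc_two_mul_sub_of_abs_sub_le {R : Type*} [CommRing R] [LinearOrder R]
    [IsStrictOrderedRing R] {m x y : R} (h : |y - m| ≤ |x - m|) : y ∈ uIcc x (2 * m - x) := by
  rw [mem_uIcc]
  rcases le_total m x with hmx | hxm
  · rw [abs_of_nonneg (sub_nonneg.2 hmx), abs_le] at h
    right; constructor <;> linarith
  · rw [abs_of_nonpos (sub_nonpos.2 hxm), abs_le] at h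
    left; constructor <;> linarith

section SymmetricConvex

variable {𝕜 β : Type*} [Field 𝕜] [LinearOrder 𝕜] [IsStrictOrderedRing 𝕜]
  [AddCommMonoid β] [LinearOrder β] [IsOrderedAddMonoid β] [Module 𝕜 β] [PosSMulStrictMono 𝕜 β]
  {s : Set 𝕜} {f : 𝕜 → β} {m x y : 𝕜}

lemma le_of_convexOn_of_symm_of_abs_sub_le (hf : ConvexOn 𝕜 s f) (hx : x ∈ s)
    (hx' : 2 * m - x ∈ s) (hsymm : f (2 * m - x) = f x) (h : |y - m| ≤ |x - m|) : f y ≤ f x := by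
  have hy : y ∈ segment 𝕜 x (2 * m - x) := by
    rw [segment_eq_uIcc]
    exact mem_uIcc_two_mul_sub_of_abs_sub_le h
  simpa only [hsymm, max_self] using hf.le_on_segment hx hx' hy

lemma isMinOn_Icc_of_convexOn_of_symm (hf : ConvexOn 𝕜 univ f)
    (hsymm : ∀ x, f (2 * m - x) = f x) (a b : 𝕜) : IsMinOn f (Icc a b) (max a (min b m)) :=
  isMinOn_iff.2 fun x hx =>
    le_of_convexOn_of_symm_of_abs_sub_le hf (mem_univ x) (mem_univ _) (hsymm x)
      (abs_max_min_sub_le hx m)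

end SymmetricConvex

section EnergyCost

/-- The weighted-sum energy cost of relaying at rate `x` out of a total rate `D`, with effective
energy costs `θi` of the source and `θj` of the helper, and without the factor `σ² / G_i`. The base
`b` of the rate-energy trade-off is `2` in the paper. -/
noncomputable def weightedEnergyCost (b θi θj D x : ℝ) : ℝ :=
  θj * (b ^ x - 1) + θi * (b ^ (D - x) - 1)

variable {b θi θj : ℝ}

lemma convexOn_weightedEnergyCost (hb : 0 < b) (hθi : 0 ≤ θi) (hθj : 0 ≤ θj) (D : ℝ) :
    ConvexOn ℝ univ (weightedEnergyCost b θi θj D) := by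
  have hpow : ConvexOn ℝ univ fun x : ℝ => b ^ x - 1 :=
    (convexOn_rpow_left hb).sub (concaveOn_const 1 convex_univ)
  have hpow_reflect : ConvexOn ℝ univ fun x : ℝ => b ^ (D - x) - 1 :=
    hpow.comp_affineMap (AffineMap.const ℝ ℝ D - AffineMap.id ℝ ℝ)
  exact (hpow.smul hθj).add (hpow_reflect.smul hθi)

lemma weightedEnergyCost_reflect (hb : 0 < b) (hb₁ : b ≠ 1) (hθi : 0 < θi) (hθj : 0 < θj)
    (D x : ℝ) :
    weightedEnergyCost b θi θj D (D + Real.logb b (θi / θj) - x) =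
      weightedEnergyCost b θi θj D x := by
  set L := Real.logb b (θi / θj)
  have hweight : θj * b ^ L = θi := by
    rw [Real.rpow_logb hb hb₁ (div_pos hθi hθj), mul_div_cancel₀ _ hθj.ne']
  have helper_term : θj * b ^ (D + L - x) = θi * b ^ (D - x) := by
    rw [← hweight, mul_assoc, ← Real.rpow_add hb]
    ring_nf
  have source_term : θi * b ^ (D - (D + L - x)) = θj * b ^ x := by
    rw [← hweight, mul_assoc, ← Real.rpow_add hb]
    ring_nf
  unfold weightedEnergyCost
  linear_combination helper_term + source_term

lemma isMinOn_weightedEnergyCost (hb : 0 < b) (hb₁ : b ≠ 1) (hθi : 0 < θi) (hθj : 0 < θj)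
    (D u v : ℝ) :
    IsMinOn (weightedEnergyCost b θi θj D) (Icc u v)
      (max u (min v ((D + Real.logb b (θi / θj)) / 2))) := by
  refine isMinOn_Icc_of_convexOn_of_symm
    (convexOn_weightedEnergyCost hb hθi.le hθj.le D) (fun x => ?_) u v
  rw [mul_div_cancel₀ _ two_ne_zero]
  exact weightedEnergyCost_reflect hb hb₁ hθi hθj D x

end EnergyCost

/-- Proposition 3.1: the weighted-sum energy cost
`f(x) = θⱼ(2^x − 1) + θᵢ(2^{D−x} − 1)` attains its minimum over `[0, D]` at the
threshold point `x̂` determined by `L = log₂(θᵢ/θⱼ)`. -/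
theorem min_of_weighted_energy_cost
    (θi θj D : ℝ) (hθi : 0 < θi) (hθj : 0 < θj) (hD : 0 < D)
    (f : ℝ → ℝ)
    (hf : ∀ x : ℝ, f x = θj * ((2:ℝ) ^ x - 1) + θi * ((2:ℝ) ^ (D - x) - 1))
    (L : ℝ) (hL : L = Real.logb 2 (θi / θj))
    (xhat : ℝ)
    (hxhat : xhat = if L < -D then 0 else if L < D then (D + L) / 2 else D) :
    xhat ∈ Set.Icc 0 D ∧ IsMinOn f (Set.Icc 0 D) xhat := by
  obtain rfl : f = weightedEnergyCost 2 θi θj D := funext hf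
  rw [← max_zero_min_half_add_eq_ite hD.le] at hxhat
  subst hxhat hL
  exact ⟨⟨le_max_left _ _, max_le hD.le (min_le_left _ _)⟩,
    isMinOn_weightedEnergyCost two_pos (by norm_num) hθi hθj D 0 D⟩
end

section
/- Let θ_i, θ_j > 0 and D > 0, and suppose log₂(θ_i/θ_j) ≤ −D. Then the function f(x) = θ_j(2^x − 1) + θ_i(2^{D−x} − 1) is strictly increasing on [0, D]; in particular its minimum over [0, D] is attained at x = 0. -/
/-!
In the variable `t = 2 ^ x` the cost is, up to a constant, `p * t + q / t` with `p = θj` and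
`q = θi * 2 ^ D`. This increases as soon as `q ≤ p * t ^ 2`; the hypothesis on the logarithm says
exactly that this holds at `t = 1`, that is, at `x = 0`.
-/

open Set

theorem strictMonoOn_mul_add_div_Ici {K : Type*} [Field K] [LinearOrder K] [IsStrictOrderedRing K]
    {p q s : K} (hp : 0 < p) (hs : 0 < s) (h : q ≤ p * s ^ 2) :
    StrictMonoOn (fun t ↦ p * t + q / t) (Ici s) := by
  intro a (ha : s ≤ a) b _ hab
  have ha₀ : 0 < a := hs.trans_le ha
  have hb₀ : 0 < b := ha₀.trans hab
  have hq : q < p * (a * b) := calc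
    q ≤ p * s ^ 2 := h
    _ ≤ p * a ^ 2 := by gcongr
    _ < p * (a * b) := by rw [sq]; gcongr
  have hdiff : (p * b + q / b) - (p * a + q / a) = (b - a) * (p - q / (a * b)) := by
    field_simp
    ring
  refine sub_pos.1 (hdiff ▸ mul_pos (sub_pos.2 hab) (sub_pos.2 ?_))
  exact (div_lt_iff₀ (mul_pos ha₀ hb₀)).2 hq

theorem strictMonoOn_mul_rpow_add_mul_rpow_sub_Ici {c p q d s : ℝ} (hc : 1 < c) (hp : 0 < p)
    (h : q * c ^ (d - s) ≤ p * c ^ s) :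
    StrictMonoOn (fun x : ℝ ↦ p * c ^ x + q * c ^ (d - x)) (Ici s) := by
  have hc₀ : 0 < c := zero_lt_one.trans hc
  have hexp : StrictMono fun x : ℝ ↦ c ^ x := Real.strictMono_rpow_of_base_gt_one hc
  have hq : q * c ^ d ≤ p * (c ^ s) ^ 2 := by
    rwa [Real.rpow_sub hc₀, ← mul_div_assoc, div_le_iff₀ (Real.rpow_pos_of_pos hc₀ s), mul_assoc,
      ← sq] at h
  simpa only [Function.comp_def, Real.rpow_sub hc₀, mul_div_assoc] using
    (strictMonoOn_mul_add_div_Ici hp (Real.rpow_pos_of_pos hc₀ s) hq).comp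
      (hexp.strictMonoOn (Ici s)) fun _ hx ↦ hexp.monotone hx

theorem logb_div_le_neg_iff {c a b d : ℝ} (hc : 1 < c) (ha : 0 < a) (hb : 0 < b) :
    Real.logb c (a / b) ≤ -d ↔ a * c ^ d ≤ b := by
  have hc₀ : 0 < c := zero_lt_one.trans hc
  rw [Real.logb_le_iff_le_rpow hc (div_pos ha hb), Real.rpow_neg hc₀.le, div_le_iff₀ hb,
    le_inv_mul_iff₀ (Real.rpow_pos_of_pos hc₀ d), mul_comm]

/-- First case in the proof of Proposition 3.1: if `log₂(θᵢ/θⱼ) ≤ −D`, then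
`f(x) = θⱼ(2^x − 1) + θᵢ(2^{D−x} − 1)` is strictly increasing on `[0, D]`, so its
minimum over `[0, D]` is attained at `x = 0`. -/
theorem strictMonoOn_energy_cost_of_log_ratio_le
    (θi θj D : ℝ) (hθi : 0 < θi) (hθj : 0 < θj) (hD : 0 < D)
    (h : Real.logb 2 (θi / θj) ≤ -D)
    (f : ℝ → ℝ)
    (hf : ∀ x : ℝ, f x = θj * ((2:ℝ) ^ x - 1) + θi * ((2:ℝ) ^ (D - x) - 1)) :
    StrictMonoOn f (Set.Icc 0 D) ∧ IsMinOn f (Set.Icc 0 D) 0 := by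
  have hθ : θi * 2 ^ D ≤ θj := (logb_div_le_neg_iff one_lt_two hθi hθj).1 h
  have hf' : f = fun x ↦ θj * 2 ^ x + θi * 2 ^ (D - x) + -(θj + θi) := by
    ext x
    rw [hf]
    ring
  have hmono : StrictMonoOn f (Ici 0) := by
    rw [hf']
    refine (strictMonoOn_mul_rpow_add_mul_rpow_sub_Ici one_lt_two hθj ?_).add_const _
    simpa using hθ
  exact ⟨hmono.mono Icc_subset_Ici_self, fun x hx ↦ hmono.monotoneOn self_mem_Ici hx.1 hx.1⟩
end

section
/- Let θ_i, θ_j > 0 and D > 0, and suppose log₂(θ_i/θ_j) ≥ D. Then the function f(x) = θ_j(2^x − 1) + θ_i(2^{D−x} − 1) is strictly decreasing on [0, D]; in particular its minimum over [0, D] is attained at x = D. -/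
/-!
In the variable `t = 2 ^ x` the cost is, up to a constant, `θj t + θi 2 ^ D / t`, which strictly
decreases as long as `θj t ^ 2 ≤ θi 2 ^ D`, that is, up to its critical point
`x = (D + log₂ (θi / θj)) / 2`. The hypothesis on the logarithm says that this point is at least
`D`.
-/

open Set

theorem strictAntiOn_mul_add_div {K : Type*} [Field K] [LinearOrder K] [IsStrictOrderedRing K]
    {p c : K} (hp : 0 < p) :
    StrictAntiOn (fun t ↦ p * t + c / t) {t | 0 < t ∧ p * t ^ 2 ≤ c} := by
  rintro s ⟨hs, -⟩ t ⟨ht, htc⟩ hst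
  have hpst : p * (s * t) < c := calc
    p * (s * t) < p * t ^ 2 := by rw [sq]; gcongr
    _ ≤ c := htc
  have hdiff : (p * s + c / s) - (p * t + c / t) = (t - s) * (c - p * (s * t)) / (s * t) := by
    field_simp
    ring
  refine sub_pos.mp (hdiff ▸ ?_)
  exact div_pos (mul_pos (sub_pos.mpr hst) (sub_pos.mpr hpst)) (mul_pos hs ht)

section RealPowers

variable {b p q : ℝ}

theorem mul_rpow_sq_le_mul_rpow_iff (hb : 1 < b) (hp : 0 < p) (hq : 0 < q) (d x : ℝ) :
    p * (b ^ x) ^ 2 ≤ q * b ^ d ↔ x ≤ (d + Real.logb b (q / p)) / 2 := by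
  have hb₀ : 0 < b := one_pos.trans hb
  have hpow : (b ^ x) ^ 2 = b ^ (2 * x - d) * b ^ d := by
    rw [← Real.rpow_mul_natCast hb₀.le, ← Real.rpow_add hb₀]
    congr 1
    push_cast
    ring
  calc p * (b ^ x) ^ 2 ≤ q * b ^ d
      ↔ p * b ^ (2 * x - d) ≤ q := by
        rw [hpow, ← mul_assoc, mul_le_mul_iff_left₀ (Real.rpow_pos_of_pos hb₀ d)]
    _ ↔ 2 * x - d ≤ Real.logb b (q / p) := by
        rw [Real.le_logb_iff_rpow_le hb (div_pos hq hp), le_div_iff₀' hp]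
    _ ↔ x ≤ (d + Real.logb b (q / p)) / 2 := by
        rw [le_div_iff₀' two_pos, sub_le_iff_le_add']

theorem strictAntiOn_mul_rpow_add_mul_rpow_sub (hb : 1 < b) (hp : 0 < p) (hq : 0 < q) (d : ℝ) :
    StrictAntiOn (fun x ↦ p * b ^ x + q * b ^ (d - x))
      (Iic ((d + Real.logb b (q / p)) / 2)) := by
  have hb₀ : 0 < b := one_pos.trans hb
  have hcomp : StrictAntiOn (fun x : ℝ ↦ p * b ^ x + q * b ^ d / b ^ x)
      (Iic ((d + Real.logb b (q / p)) / 2)) :=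
    (strictAntiOn_mul_add_div hp).comp_strictMonoOn
      ((Real.strictMono_rpow_of_base_gt_one hb).strictMonoOn _)
      fun x hx ↦ ⟨Real.rpow_pos_of_pos hb₀ x, (mul_rpow_sq_le_mul_rpow_iff hb hp hq d x).mpr hx⟩
  simpa only [Real.rpow_sub hb₀, mul_div_assoc] using hcomp

end RealPowers

theorem strictAntiOn_energy_cost_of_log_ratio_ge_general
    {b θi θj D m : ℝ} (hb : 1 < b) (hθi : 0 < θi) (hθj : 0 < θj)
    (hm : m ≤ (D + Real.logb b (θi / θj)) / 2)
    {f : ℝ → ℝ} (hf : ∀ x : ℝ, f x = θj * (b ^ x - 1) + θi * (b ^ (D - x) - 1)) :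
    StrictAntiOn f (Iic m) ∧ IsMinOn f (Iic m) m := by
  have hf_eq : f = fun x ↦ θj * b ^ x + θi * b ^ (D - x) + -(θj + θi) := by
    funext x
    rw [hf]
    ring
  have hanti : StrictAntiOn f (Iic m) :=
    hf_eq ▸ ((strictAntiOn_mul_rpow_add_mul_rpow_sub hb hθj hθi D).mono
      (Iic_subset_Iic.mpr hm)).add_const _
  exact ⟨hanti, fun _ hx ↦ hanti.antitoneOn hx self_mem_Iic hx⟩

/-- Third case in the proof of Proposition 3.1: if `log₂(θᵢ/θⱼ) ≥ D`, then
`f(x) = θⱼ(2^x − 1) + θᵢ(2^{D−x} − 1)` is strictly decreasing on `[0, D]`, so its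
minimum over `[0, D]` is attained at `x = D`. -/
theorem strictAntiOn_energy_cost_of_log_ratio_ge
    (θi θj D : ℝ) (hθi : 0 < θi) (hθj : 0 < θj) (hD : 0 < D)
    (h : D ≤ Real.logb 2 (θi / θj))
    (f : ℝ → ℝ)
    (hf : ∀ x : ℝ, f x = θj * ((2:ℝ) ^ x - 1) + θi * ((2:ℝ) ^ (D - x) - 1)) :
    StrictAntiOn f (Set.Icc 0 D) ∧ IsMinOn f (Set.Icc 0 D) D := by
  have hDm : D ≤ (D + Real.logb 2 (θi / θj)) / 2 := by linarith
  exact (strictAntiOn_energy_cost_of_log_ratio_ge_general one_lt_two hθi hθj hDm hf).imp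
    (·.mono Icc_subset_Iic_self) (·.on_subset Icc_subset_Iic_self)
end

section
/- For every a > 0, the function φ_a(w) = w(1 − e^{−a/w}) is strictly increasing on (0, ∞). -/
/-!
For fixed `v` and `0 < x < y`, the point `y⁻¹ • v` is the convex combination of `x⁻¹ • v` and `0`
with weight `x / y` on the former. Strict convexity of `f` there, scaled by `y`, compares the
perspective `w ↦ w • f (w⁻¹ • v)` at `x` and `y`, up to a multiple of `f 0`. The acceptance
function is the case `f = exp`, `v = -a`.
-/

section Perspective

variable {𝕜 E β : Type*} [Field 𝕜] [LinearOrder 𝕜] [IsStrictOrderedRing 𝕜]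
  [AddCommMonoid E] [Module 𝕜 E]
  [AddCommGroup β] [PartialOrder β] [IsOrderedAddMonoid β] [Module 𝕜 β] [PosSMulStrictMono 𝕜 β]

theorem strictMonoOn_smul_apply_zero_sub_of_strictConvexOn {s : Set E} {f : E → β}
    (hf : StrictConvexOn 𝕜 s f) (h0 : 0 ∈ s) {v : E} (hv : v ≠ 0) :
    StrictMonoOn (fun w : 𝕜 => w • (f 0 - f (w⁻¹ • v))) {w | 0 < w ∧ w⁻¹ • v ∈ s} := by
  rintro x ⟨hx, hxs⟩ y ⟨hy, -⟩ hxy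
  have hne : x⁻¹ • v ≠ 0 := smul_ne_zero (inv_ne_zero hx.ne') hv
  have hcomb : (x / y) • x⁻¹ • v + (1 - x / y) • (0 : E) = y⁻¹ • v := by
    rw [smul_zero, add_zero, smul_smul, div_mul_eq_mul_div, mul_inv_cancel₀ hx.ne', one_div]
  have hconv : f (y⁻¹ • v) < (x / y) • f (x⁻¹ • v) + (1 - x / y) • f 0 :=
    hcomb ▸ hf.2 hxs h0 hne (div_pos hx hy) (sub_pos.mpr ((div_lt_one hy).mpr hxy))
      (add_sub_cancel (x / y) 1)
  have hpersp : y • f (y⁻¹ • v) < x • f (x⁻¹ • v) + (y - x) • f 0 :=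
    calc y • f (y⁻¹ • v)
        < y • ((x / y) • f (x⁻¹ • v) + (1 - x / y) • f 0) := smul_lt_smul_of_pos_left hconv hy
      _ = x • f (x⁻¹ • v) + (y - x) • f 0 := by
        rw [smul_add, smul_smul, smul_smul, mul_sub, mul_one, mul_div_cancel₀ x hy.ne']
  calc x • (f 0 - f (x⁻¹ • v))
      = y • f 0 - (x • f (x⁻¹ • v) + (y - x) • f 0) := by module
    _ < y • f 0 - y • f (y⁻¹ • v) := sub_lt_sub_left hpersp _
    _ = y • (f 0 - f (y⁻¹ • v)) := (smul_sub _ _ _).symm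

end Perspective

theorem strictMonoOn_acceptance_function_general {a : ℝ} (ha : a ≠ 0) :
    StrictMonoOn (fun w : ℝ => w * (1 - Real.exp (-a / w))) (Set.Ioi 0) := by
  simpa [div_eq_inv_mul, Set.Ioi] using
    strictMonoOn_smul_apply_zero_sub_of_strictConvexOn strictConvexOn_exp (Set.mem_univ 0)
      (neg_ne_zero.mpr ha)

/-- For every `a > 0`, the acceptance function `φₐ(w) = w(1 − e^{−a/w})` is
strictly increasing on `(0, ∞)`. -/
theorem strictMonoOn_acceptance_function (a : ℝ) (ha : 0 < a) :
    StrictMonoOn (fun w : ℝ => w * (1 - Real.exp (-a / w))) (Set.Ioi 0) :=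
  strictMonoOn_acceptance_function_general ha.ne'
end

section
/- Let a > 0, c > 0 and ε ∈ ℝ, and define ψ(π) = 1 − (c(π−ε)/a)(1 − e^{−a/(c(π−ε))}) for π > ε. Then ψ is convex on (ε, ∞), strictly decreasing on (ε, ∞), and satisfies 0 < ψ(π) < 1 for every π > ε. -/
/-!
Put `R u = e^u - (1 + u)` and `t = c (p - ε) / a`. Then `ψ p = t R(-1/t)`, which is the perspective
`(x, t) ↦ t R(x/t)` of `R` along the line `x = -1`. Perspectives of convex functions are jointly
convex, so `ψ` is convex. Since `R 0 = 0`, the value `t R(x/t)` is, for fixed `x ≠ 0`, the slope of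
the chord of `v ↦ R(v x)` from `0` to `1/t`; by strict convexity it decreases as `1/t` does. The
bounds on `ψ` come from `0 < R u < -u` at `u = -1/t < 0`.
-/

section Perspective

variable {𝕜 E β : Type*} [Field 𝕜] [AddCommGroup E] [Module 𝕜 E] [AddCommGroup β] [Module 𝕜 β]

/-- The perspective `(x, t) ↦ t f(x/t)` of `f`, encoded on all of `E × 𝕜` but meaningful only for
`t > 0`; its joint convexity is what makes rescaled convex functions convex in the scale. -/
def perspective (f : E → β) (p : E × 𝕜) : β := p.2 • f (p.2⁻¹ • p.1)

lemma inv_smul_combo_eq {t u : 𝕜} (ht : t ≠ 0) (hu : u ≠ 0) (a b : 𝕜) (x y : E) :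
    (a * t + b * u)⁻¹ • (a • x + b • y) =
      (a * t / (a * t + b * u)) • t⁻¹ • x + (b * u / (a * t + b * u)) • u⁻¹ • y := by
  simp only [smul_add, smul_smul]
  congr 2 <;> field_simp

variable [LinearOrder 𝕜] [IsStrictOrderedRing 𝕜] [PartialOrder β] {s : Set E} {f : E → β}

lemma convex_setOf_inv_smul_mem (hs : Convex 𝕜 s) :
    Convex 𝕜 {p : E × 𝕜 | 0 < p.2 ∧ p.2⁻¹ • p.1 ∈ s} := by
  rintro ⟨x, t⟩ ⟨ht : 0 < t, hx⟩ ⟨y, u⟩ ⟨hu : 0 < u, hy⟩ a b ha hb hab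
  have h_pos : 0 < a * t + b * u := convex_Ioi (0 : 𝕜) ht hu ha hb hab
  refine ⟨h_pos, ?_⟩
  simp only [Prod.smul_mk, Prod.mk_add_mk, smul_eq_mul, inv_smul_combo_eq ht.ne' hu.ne']
  exact convex_iff_div.1 hs hx hy (by positivity) (by positivity) h_pos

lemma convexOn_perspective [PosSMulMono 𝕜 β] (hf : ConvexOn 𝕜 s f) :
    ConvexOn 𝕜 {p : E × 𝕜 | 0 < p.2 ∧ p.2⁻¹ • p.1 ∈ s} (perspective f) := by
  refine ⟨convex_setOf_inv_smul_mem hf.1, ?_⟩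
  rintro ⟨x, t⟩ ⟨ht : 0 < t, hx⟩ ⟨y, u⟩ ⟨hu : 0 < u, hy⟩ a b ha hb hab
  have h_pos : 0 < a * t + b * u := convex_Ioi (0 : 𝕜) ht hu ha hb hab
  have h_jensen : f ((a * t + b * u)⁻¹ • (a • x + b • y)) ≤
      (a * t / (a * t + b * u)) • f (t⁻¹ • x) + (b * u / (a * t + b * u)) • f (u⁻¹ • y) := by
    rw [inv_smul_combo_eq ht.ne' hu.ne']
    exact (convexOn_iff_div.1 hf).2 hx hy (by positivity) (by positivity) h_pos
  calc
    (a * t + b * u) • f ((a * t + b * u)⁻¹ • (a • x + b • y))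
      ≤ (a * t + b * u) • ((a * t / (a * t + b * u)) • f (t⁻¹ • x) +
          (b * u / (a * t + b * u)) • f (u⁻¹ • y)) :=
      smul_le_smul_of_nonneg_left h_jensen h_pos.le
    _ = a • t • f (t⁻¹ • x) + b • u • f (u⁻¹ • y) := by
      simp only [smul_add, smul_smul, mul_div_cancel₀ _ h_pos.ne']

lemma strictAntiOn_perspective [IsOrderedAddMonoid β] [PosSMulStrictMono 𝕜 β]
    (hf : StrictConvexOn 𝕜 s f) (h0s : 0 ∈ s) (hf0 : f 0 ≤ 0) {x : E} (hx : x ≠ 0) :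
    StrictAntiOn (fun t : 𝕜 ↦ perspective f (x, t)) {t | 0 < t ∧ t⁻¹ • x ∈ s} := by
  rintro t ⟨ht, hts⟩ u ⟨hu, -⟩ htu
  have h_ne : 0 ≠ t⁻¹ • x := (smul_ne_zero (inv_ne_zero ht.ne') hx).symm
  have h_weight : 0 < 1 - t / u := sub_pos.2 ((div_lt_one hu).2 htu)
  have h_combo : u⁻¹ • x = (1 - t / u) • (0 : E) + (t / u) • t⁻¹ • x := by
    rw [smul_zero, zero_add, smul_smul]
    congr 1
    field_simp
  have h_chord : f (u⁻¹ • x) < (t / u) • f (t⁻¹ • x) :=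
    calc
      f (u⁻¹ • x) < (1 - t / u) • f 0 + (t / u) • f (t⁻¹ • x) := by
        rw [h_combo]
        exact hf.2 h0s hts h_ne h_weight (div_pos ht hu) (sub_add_cancel 1 _)
      _ ≤ (t / u) • f (t⁻¹ • x) :=
        add_le_of_nonpos_left (smul_nonpos_of_nonneg_of_nonpos h_weight.le hf0)
  calc
    u • f (u⁻¹ • x) < u • (t / u) • f (t⁻¹ • x) := smul_lt_smul_of_pos_left h_chord hu
    _ = t • f (t⁻¹ • x) := by rw [smul_smul, mul_div_cancel₀ _ hu.ne']

end Perspective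

/-- The first-order Taylor remainder of `exp` at `0`; its perspective along `x = -1` is the
rejection probability as a function of the scaled price margin. -/
noncomputable def expRemainder (u : ℝ) : ℝ := Real.exp u - (1 + u)

lemma expRemainder_zero : expRemainder 0 = 0 := by simp [expRemainder]

lemma strictConvexOn_expRemainder : StrictConvexOn ℝ Set.univ expRemainder :=
  strictConvexOn_exp.sub_concaveOn
    ((concaveOn_const 1 convex_univ).add (concaveOn_id convex_univ))

lemma expRemainder_pos {u : ℝ} (hu : u ≠ 0) : 0 < expRemainder u := by
  rw [expRemainder]
  linarith [Real.add_one_lt_exp hu]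

lemma expRemainder_lt_neg {u : ℝ} (hu : u < 0) : expRemainder u < -u := by
  rw [expRemainder]
  linarith [Real.exp_lt_one_iff.2 hu]

lemma perspective_expRemainder_neg_one {t : ℝ} (ht : t ≠ 0) :
    perspective expRemainder (-1, t) = 1 - t * (1 - Real.exp (-t⁻¹)) := by
  simp only [perspective, expRemainder, smul_eq_mul, mul_neg_one]
  field_simp
  ring

lemma perspective_expRemainder_mem_Ioo {x t : ℝ} (hx : x < 0) (ht : 0 < t) :
    perspective expRemainder (x, t) ∈ Set.Ioo 0 (-x) := by
  have h_neg : t⁻¹ * x < 0 := mul_neg_of_pos_of_neg (inv_pos.2 ht) hx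
  refine ⟨mul_pos ht (expRemainder_pos h_neg.ne), ?_⟩
  calc
    t * expRemainder (t⁻¹ * x) < t * -(t⁻¹ * x) :=
      mul_lt_mul_of_pos_left (expRemainder_lt_neg h_neg) ht
    _ = -x := by rw [mul_neg, mul_inv_cancel_left₀ ht.ne']

lemma convexOn_perspective_expRemainder (x : ℝ) :
    ConvexOn ℝ (Set.Ioi 0) fun t : ℝ ↦ perspective expRemainder (x, t) :=
  ((convexOn_perspective strictConvexOn_expRemainder.convexOn).comp_affineMap
    ((AffineMap.const ℝ ℝ x).prod (AffineMap.id ℝ ℝ))).subset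
      (fun _ ht ↦ ⟨ht, Set.mem_univ _⟩) (convex_Ioi 0)

lemma strictAntiOn_perspective_expRemainder {x : ℝ} (hx : x ≠ 0) :
    StrictAntiOn (fun t : ℝ ↦ perspective expRemainder (x, t)) (Set.Ioi 0) :=
  (strictAntiOn_perspective strictConvexOn_expRemainder (Set.mem_univ 0)
    expRemainder_zero.le hx).mono fun _ ht ↦ ⟨ht, Set.mem_univ _⟩

/-- Appendix B: the rejection probability
`ψ(p) = 1 − (c(p−ε)/a)(1 − e^{−a/(c(p−ε))})` is convex on `(ε, ∞)`, strictly
decreasing on `(ε, ∞)`, and satisfies `0 < ψ(p) < 1` for every `p > ε`. -/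
theorem rejection_probability_convex_antitone_bounds
    (a c ε : ℝ) (ha : 0 < a) (hc : 0 < c)
    (ψ : ℝ → ℝ)
    (hψ : ∀ p : ℝ, ψ p =
      1 - (c * (p - ε) / a) * (1 - Real.exp (-a / (c * (p - ε))))) :
    ConvexOn ℝ (Set.Ioi ε) ψ ∧ StrictAntiOn ψ (Set.Ioi ε) ∧
    ∀ p ∈ Set.Ioi ε, 0 < ψ p ∧ ψ p < 1 := by
  let scale : ℝ →ᵃ[ℝ] ℝ := (c / a) • (AffineMap.id ℝ ℝ - AffineMap.const ℝ ℝ ε)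
  have scale_apply (p : ℝ) : scale p = c * (p - ε) / a := by simp [scale, mul_div_right_comm]
  have scale_pos : Set.MapsTo scale (Set.Ioi ε) (Set.Ioi 0) := fun p hp ↦ by
    rw [Set.mem_Ioi, scale_apply]
    exact div_pos (mul_pos hc (sub_pos.2 hp)) ha
  have scale_strictMono : StrictMono scale := fun p q hpq ↦ by simp only [scale_apply]; gcongr
  have eqOn_perspective :
      Set.EqOn (fun p ↦ perspective expRemainder (-1, scale p)) ψ (Set.Ioi ε) := fun p hp ↦ by
    dsimp only
    rw [perspective_expRemainder_neg_one (scale_pos hp).ne', scale_apply, hψ, inv_div, neg_div]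
  refine ⟨ConvexOn.congr ?convex eqOn_perspective, StrictAntiOn.congr ?anti eqOn_perspective,
    fun p hp ↦ ?bounds⟩
  case convex =>
    exact ((convexOn_perspective_expRemainder (-1)).comp_affineMap scale).subset scale_pos
      (convex_Ioi ε)
  case anti =>
    exact (strictAntiOn_perspective_expRemainder (by norm_num)).comp_strictMonoOn
      (scale_strictMono.strictMonoOn _) scale_pos
  case bounds =>
    simpa [← eqOn_perspective hp] using
      perspective_expRemainder_mem_Ioo neg_one_lt_zero (scale_pos hp)
end

section
/- Let a > 0, c > 0, ε ∈ ℝ, K ∈ ℝ with ε < K, B ∈ ℝ, μ > 0, and define ψ(π) = 1 − (c(π−ε)/a)(1 − e^{−a/(c(π−ε))}) for π > ε, and Poisson weights p_n = μⁿ e^{−μ}/n! for n ∈ ℕ. Then the expected-cost function F(π) = Σ_{n=0}^∞ p_n [(1 − ψ(π)ⁿ)(π − K) + B] is well defined (the series converges) and convex on the interval (ε, K]. -/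
/-!
If each of the Poisson(`μ`) many helpers accepts the price `p` with probability `q = 1 - ψ p`, at
least one of them accepts with probability `1 - exp (-μ q)`, and this multiplies `p - K` in the
expected cost. With `t = p - ε` and `k = a / c`, the function `q = t * g t⁻¹` is the perspective of
the concave function `g s = k⁻¹ * (1 - exp (-k s))`, which vanishes at `0`. So `q` is concave, and
it is increasing because the chords of `g` from the origin have decreasing slope; `1 - exp (-μ q)`
inherits both properties. The product of this nonnegative increasing concave function with the
nonpositive increasing affine function `p - K` is convex.
-/

open Set Real

theorem concaveOn_comp_of_mapsTo {𝕜 E β γ : Type*} [Semiring 𝕜] [PartialOrder 𝕜]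
    [AddCommMonoid E] [AddCommMonoid β] [PartialOrder β] [AddCommMonoid γ] [PartialOrder γ]
    [SMul 𝕜 E] [SMul 𝕜 β] [SMul 𝕜 γ] {s : Set E} {t : Set β} {f : E → β} {g : β → γ}
    (hg : ConcaveOn 𝕜 t g) (hg_mono : MonotoneOn g t) (hf : ConcaveOn 𝕜 s f)
    (hst : MapsTo f s t) : ConcaveOn 𝕜 s fun x => g (f x) :=
  ⟨hf.1, fun _ hx _ hy _ _ ha hb hab =>
    (hg.2 (hst hx) (hst hy) ha hb hab).trans <|
      hg_mono (hg.1 (hst hx) (hst hy) ha hb hab) (hst (hf.1 hx hy ha hb hab))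
        (hf.2 hx hy ha hb hab)⟩

section Perspective

variable {𝕜 : Type*} [Field 𝕜] [LinearOrder 𝕜] [IsStrictOrderedRing 𝕜]

theorem concaveOn_smul_comp_inv {β : Type*} [AddCommMonoid β] [PartialOrder β] [Module 𝕜 β]
    [PosSMulMono 𝕜 β] {f : 𝕜 → β} (hf : ConcaveOn 𝕜 (Ioi 0) f) :
    ConcaveOn 𝕜 (Ioi 0) fun x => x • f x⁻¹ := by
  refine ⟨convex_Ioi 0, fun x (hx : 0 < x) y (hy : 0 < y) a b ha hb hab => ?_⟩
  have hz : 0 < a * x + b * y := convex_Ioi (0 : 𝕜) hx hy ha hb hab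
  simp only [smul_eq_mul]
  set z := a * x + b * y
  have hweights : a * x / z + b * y / z = 1 := by rw [← add_div, div_self hz.ne']
  have hz_inv : z⁻¹ = (a * x / z) • x⁻¹ + (b * y / z) • y⁻¹ := by
    simp only [smul_eq_mul]
    field_simp
    exact hab.symm
  calc a • x • f x⁻¹ + b • y • f y⁻¹
      = z • ((a * x / z) • f x⁻¹ + (b * y / z) • f y⁻¹) := by
        simp only [smul_add, smul_smul, mul_div_cancel₀ _ hz.ne']
    _ ≤ z • f z⁻¹ := by
        rw [hz_inv]
        exact smul_le_smul_of_nonneg_left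
          (hf.2 (inv_pos.2 hx) (inv_pos.2 hy) (by positivity) (by positivity) hweights) hz.le

theorem monotoneOn_mul_comp_inv {f : 𝕜 → 𝕜} (hf : ConcaveOn 𝕜 (Ici 0) f) (hf₀ : 0 ≤ f 0) :
    MonotoneOn (fun x => x * f x⁻¹) (Ioi 0) := by
  have hslope (x : 𝕜) : x * f x⁻¹ = slope f 0 x⁻¹ + x * f 0 := by
    rw [slope_def_field, sub_zero, div_inv_eq_mul]
    ring
  have hmem {x : 𝕜} (hx : 0 < x) : x⁻¹ ∈ Ici 0 \ {0} :=
    ⟨(inv_pos.2 hx).le, (inv_pos.2 hx).ne'⟩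
  intro x hx y hy hxy
  simp only [hslope]
  gcongr ?_ + ?_
  · exact hf.slope_anti self_mem_Ici (hmem hy) (hmem hx) (inv_anti₀ hx hxy)
  · gcongr

end Perspective

section ExponentialSaturation

theorem concaveOn_one_sub_exp_neg_mul (k : ℝ) :
    ConcaveOn ℝ univ fun t => 1 - exp (-(k * t)) := by
  have hexp : ConvexOn ℝ univ fun t => exp (-k * t) :=
    convexOn_exp.comp_linearMap (LinearMap.mulLeft ℝ (-k))
  simp only [← neg_mul]
  exact (concaveOn_const 1 convex_univ).sub hexp

theorem monotone_one_sub_exp_neg_mul {k : ℝ} (hk : 0 ≤ k) :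
    Monotone fun t => 1 - exp (-(k * t)) := by
  intro s t hst
  dsimp only
  gcongr

theorem one_sub_exp_neg_mul_nonneg {k t : ℝ} (hk : 0 ≤ k) (ht : 0 ≤ t) :
    0 ≤ 1 - exp (-(k * t)) := by
  simpa using mul_nonneg hk ht

end ExponentialSaturation

section AcceptProb

variable {k : ℝ}

/-- The probability that one helper accepts the offered price, as a function of its excess `t` over
`ε`: in the notation of the theorem, `1 - ψ p = acceptProb (a / c) (p - ε)`. It is written as a
perspective `t * g t⁻¹`, and is meant for `0 < k` and `0 < t`. -/
noncomputable def acceptProb (k t : ℝ) : ℝ := t * (k⁻¹ * (1 - exp (-(k * t⁻¹))))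

theorem concaveOn_inv_mul_one_sub_exp_neg_mul (hk : 0 ≤ k) :
    ConcaveOn ℝ univ fun t => k⁻¹ * (1 - exp (-(k * t))) :=
  (concaveOn_one_sub_exp_neg_mul k).smul (inv_nonneg.2 hk)

theorem concaveOn_acceptProb (hk : 0 ≤ k) : ConcaveOn ℝ (Ioi 0) (acceptProb k) :=
  concaveOn_smul_comp_inv <|
    (concaveOn_inv_mul_one_sub_exp_neg_mul hk).subset (subset_univ _) (convex_Ioi 0)

theorem monotoneOn_acceptProb (hk : 0 ≤ k) : MonotoneOn (acceptProb k) (Ioi 0) :=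
  monotoneOn_mul_comp_inv
    ((concaveOn_inv_mul_one_sub_exp_neg_mul hk).subset (subset_univ _) (convex_Ici 0)) (by simp)

theorem acceptProb_nonneg (hk : 0 ≤ k) {t : ℝ} (ht : 0 ≤ t) : 0 ≤ acceptProb k t :=
  mul_nonneg ht <|
    mul_nonneg (inv_nonneg.2 hk) (one_sub_exp_neg_mul_nonneg hk (inv_nonneg.2 ht))

end AcceptProb

section ExpectedCost

theorem hasSum_poisson_mul_pow (μ w : ℝ) :
    HasSum (fun n : ℕ => μ ^ n * exp (-μ) / n.factorial * w ^ n) (exp (-(μ * (1 - w)))) := by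
  have h : HasSum (fun n : ℕ => (μ * w) ^ n / n.factorial) (exp (μ * w)) := by
    rw [exp_eq_exp_ℝ]
    exact NormedSpace.expSeries_div_hasSum_exp (μ * w)
  convert! h.mul_left (exp (-μ)) using 1
  · funext n
    rw [mul_pow]
    ring
  · rw [← exp_add]
    ring_nf

theorem hasSum_poisson_expectedCost (μ w k B : ℝ) :
    HasSum (fun n : ℕ => μ ^ n * exp (-μ) / n.factorial * ((1 - w ^ n) * k + B))
      ((1 - exp (-(μ * (1 - w)))) * k + B) := by
  have hone : HasSum (fun n : ℕ => μ ^ n * exp (-μ) / n.factorial) 1 := by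
    simpa using hasSum_poisson_mul_pow μ 1
  convert! ((hone.sub (hasSum_poisson_mul_pow μ w)).mul_right k).add (hone.mul_right B) using 1
  · funext n
    ring
  · rw [one_mul]

theorem convexOn_poisson_expectedCost {s : Set ℝ} {q : ℝ → ℝ} {μ K : ℝ} (B : ℝ) (hμ : 0 ≤ μ)
    (hsK : s ⊆ Iic K) (hq : ConcaveOn ℝ s q) (hq_mono : MonotoneOn q s)
    (hq_nonneg : ∀ p ∈ s, 0 ≤ q p) :
    ConvexOn ℝ s fun p =>
      ∑' n : ℕ, μ ^ n * exp (-μ) / n.factorial * ((1 - (1 - q p) ^ n) * (p - K) + B) := by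
  simp only [(hasSum_poisson_expectedCost _ _ _ _).tsum_eq, sub_sub_cancel]
  have hmono := monotone_one_sub_exp_neg_mul hμ
  have htrade : ConcaveOn ℝ s fun p => 1 - exp (-(μ * q p)) :=
    concaveOn_comp_of_mapsTo (g := fun t => 1 - exp (-(μ * t)))
      (concaveOn_one_sub_exp_neg_mul μ) (hmono.monotoneOn univ) hq (mapsTo_univ q s)
  have hsub : ConvexOn ℝ s fun p => p - K := (convexOn_id hq.1).add_const (-K)
  have hvary : MonovaryOn (fun p => 1 - exp (-(μ * q p))) (fun p => p - K) s :=
    (hmono.comp_monotoneOn hq_mono).monovaryOn fun x _ y _ hxy => sub_le_sub_right hxy K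
  have hprod := htrade.mul_convexOn hsub
    (fun p hp => one_sub_exp_neg_mul_nonneg hμ (hq_nonneg p hp))
    (fun p hp => sub_nonpos.2 (hsK hp)) hvary
  exact hprod.add_const B

end ExpectedCost

/-- Proposition 4.1 (marginal convexity in the price): with Poisson weights
`pₙ = μⁿ e^{−μ}/n!`, the expected cost
`F(p) = Σₙ pₙ[(1 − ψ(p)ⁿ)(p − K) + B]` is well defined (the series converges)
and convex on `(ε, K]`. -/
theorem expected_cost_summable_and_convex
    (a c ε K B μ : ℝ) (ha : 0 < a) (hc : 0 < c) (hεK : ε < K) (hμ : 0 < μ)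
    (ψ : ℝ → ℝ)
    (hψ : ∀ p : ℝ, ψ p =
      1 - (c * (p - ε) / a) * (1 - Real.exp (-a / (c * (p - ε)))))
    (pn : ℕ → ℝ) (hpn : ∀ n : ℕ, pn n = μ ^ n * Real.exp (-μ) / n.factorial)
    (F : ℝ → ℝ)
    (hF : ∀ p : ℝ, F p = ∑' n : ℕ, pn n * ((1 - ψ p ^ n) * (p - K) + B)) :
    (∀ p ∈ Set.Ioc ε K,
      Summable (fun n : ℕ => pn n * ((1 - ψ p ^ n) * (p - K) + B))) ∧
    ConvexOn ℝ (Set.Ioc ε K) F := by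
  have hk : 0 ≤ a / c := (div_pos ha hc).le
  have hψ' (p : ℝ) : ψ p = 1 - acceptProb (a / c) (p - ε) := by
    rw [hψ, acceptProb, inv_div, ← div_eq_mul_inv, div_div, ← neg_div]
    ring
  have hpos : ∀ p ∈ Ioc ε K, 0 < p - ε := fun p hp => sub_pos.2 hp.1
  have hconcave : ConcaveOn ℝ (Ioc ε K) fun p => acceptProb (a / c) (p - ε) :=
    ((concaveOn_acceptProb hk).translate_left (-ε)).subset
      (fun p hp => by simpa using hp.1) (convex_Ioc ε K)
  have hmono : MonotoneOn (fun p => acceptProb (a / c) (p - ε)) (Ioc ε K) :=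
    fun x hx y hy hxy =>
      monotoneOn_acceptProb hk (hpos x hx) (hpos y hy) (sub_le_sub_right hxy ε)
  simp only [funext hF, hpn, hψ']
  exact ⟨fun p _ => (hasSum_poisson_expectedCost _ _ _ _).summable,
    convexOn_poisson_expectedCost B hμ.le Ioc_subset_Iic_self hconcave hmono
      fun p hp => acceptProb_nonneg hk (hpos p hp).le⟩
end

section
/- Let a > 0, c > 0, π ∈ ℝ, K ∈ ℝ with π ≤ K, B ∈ ℝ, μ > 0, and p_n = μⁿ e^{−μ}/n!. For ε < π define q(ε) = φ_a(c(π−ε))/a with φ_a(w) = w(1 − e^{−a/w}), and define F̃(ε) = Σ_{n=0}^∞ p_n [(1 − (1 − q(ε))ⁿ)(π − K) + B]. Then F̃ is nondecreasing on (−∞, π): a larger reservation utility ε of the helping MTs yields a larger expected energy cost for the source MT. -/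
/-!
The cost is monotone termwise in the number `n` of helpers, so only `pₙ ≥ 0` and `∑ pₙ < ∞` matter:
since `pr - K ≤ 0`, each `(1 - (1 - s) ^ n) * (pr - K) + B` is nonincreasing in the acceptance
probability `s ∈ [0, 1]`. In turn `s = φₐ(c (pr - e)) / a` is nonincreasing in `e`, because
convexity of `exp` makes `φₐ(w) = w (1 - e^{-a/w})` nondecreasing on `(0, ∞)`.
-/

open Set

/-- The function `φₐ(w) = w (1 - e^{-a/w})`, meant for `w > 0`. -/
noncomputable def phi (a w : ℝ) : ℝ := w * (1 - Real.exp (-a / w))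

lemma phi_nonneg {a w : ℝ} (ha : 0 ≤ a) (hw : 0 ≤ w) : 0 ≤ phi a w := by
  have hexp : Real.exp (-a / w) ≤ 1 :=
    Real.exp_le_one_iff.2 (div_nonpos_of_nonpos_of_nonneg (neg_nonpos.2 ha) hw)
  exact mul_nonneg hw (sub_nonneg.2 hexp)

lemma phi_le (a : ℝ) {w : ℝ} (hw : 0 < w) : phi a w ≤ a := by
  have hexp : 1 - Real.exp (-a / w) ≤ a / w := by
    linarith [Real.add_one_le_exp (-a / w), neg_div w a]
  calc phi a w ≤ w * (a / w) := mul_le_mul_of_nonneg_left hexp hw.le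
    _ = a := mul_div_cancel₀ a hw.ne'

lemma phi_monotoneOn (a : ℝ) : MonotoneOn (phi a) (Ioi 0) := by
  intro v hv w hw hvw
  rw [mem_Ioi] at hv hw
  -- `-a/w` is the convex combination of `-a/v` and `0` with weights `v/w` and `1 - v/w`.
  have hconvex : Real.exp (-a / w) ≤ v / w * Real.exp (-a / v) + (1 - v / w) := by
    have hcomb : v / w * (-a / v) = -a / w := by field_simp
    simpa only [smul_eq_mul, mul_zero, add_zero, Real.exp_zero, mul_one, hcomb] using
      convexOn_exp.2 (mem_univ (-a / v)) (mem_univ 0) (div_nonneg hv.le hw.le)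
        (sub_nonneg.2 ((div_le_one hw).2 hvw)) (add_sub_cancel (v / w) 1)
  calc phi a v = w * (1 - (v / w * Real.exp (-a / v) + (1 - v / w))) := by
        unfold phi
        field_simp
        ring
    _ ≤ phi a w := mul_le_mul_of_nonneg_left (sub_le_sub_left hconvex 1) hw.le

/-- The probability `φₐ(c (pr - e)) / a` that a helper with reservation utility `e` accepts the
price `pr`; it is a probability for `e < pr`. -/
noncomputable def acceptanceProb (a c pr e : ℝ) : ℝ := phi a (c * (pr - e)) / a

lemma acceptanceProb_mem_Icc {a c pr e : ℝ} (ha : 0 < a) (hc : 0 < c) (he : e < pr) :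
    acceptanceProb a c pr e ∈ Icc 0 1 := by
  have hw : 0 < c * (pr - e) := mul_pos hc (sub_pos.2 he)
  exact ⟨div_nonneg (phi_nonneg ha.le hw.le) ha.le, (div_le_one ha).2 (phi_le a hw)⟩

lemma acceptanceProb_antitoneOn {a c : ℝ} (ha : 0 ≤ a) (hc : 0 < c) (pr : ℝ) :
    AntitoneOn (acceptanceProb a c pr) (Iio pr) := by
  intro x hx y hy hxy
  have hw : c * (pr - y) ≤ c * (pr - x) := by gcongr
  exact div_le_div_of_nonneg_right
    (phi_monotoneOn a (mul_pos hc (sub_pos.2 hy)) (mul_pos hc (sub_pos.2 hx)) hw) ha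

lemma summable_mul_pow {p : ℕ → ℝ} (hp : Summable p) {x : ℝ} (hx : |x| ≤ 1) :
    Summable fun n ↦ p n * x ^ n := by
  refine Summable.of_norm_bounded hp.norm fun n ↦ ?_
  rw [norm_mul, norm_pow]
  exact mul_le_of_le_one_right (norm_nonneg _) (pow_le_one₀ (norm_nonneg _) hx)

/-- The expected cost when `n` helpers are present with probability `p n` and each accepts
independently with probability `s`: the cost is `B`, changed by `D` if at least one accepts. -/
noncomputable def expectedCost (p : ℕ → ℝ) (D B s : ℝ) : ℝ :=
  ∑' n, p n * ((1 - (1 - s) ^ n) * D + B)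

lemma summable_expectedCost {p : ℕ → ℝ} (hp : Summable p) (D B : ℝ) {s : ℝ}
    (hs : |1 - s| ≤ 1) : Summable fun n ↦ p n * ((1 - (1 - s) ^ n) * D + B) := by
  refine ((hp.mul_right (D + B)).sub ((summable_mul_pow hp hs).mul_right D)).congr fun n ↦ ?_
  ring

lemma expectedCost_antitoneOn {p : ℕ → ℝ} (hp : ∀ n, 0 ≤ p n) (hsum : Summable p) {D : ℝ}
    (hD : D ≤ 0) (B : ℝ) : AntitoneOn (expectedCost p D B) (Icc 0 1) := by
  have habs {r : ℝ} (hr : r ∈ Icc 0 1) : |1 - r| ≤ 1 :=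
    abs_le.2 ⟨by linarith [hr.2], by linarith [hr.1]⟩
  intro s hs t ht hst
  refine Summable.tsum_le_tsum (fun n ↦ mul_le_mul_of_nonneg_left ?_ (hp n))
    (summable_expectedCost hsum D B (habs ht)) (summable_expectedCost hsum D B (habs hs))
  have hpow : (1 - t) ^ n ≤ (1 - s) ^ n :=
    pow_le_pow_left₀ (sub_nonneg.2 ht.2) (sub_le_sub_left hst 1) n
  linarith [mul_le_mul_of_nonpos_right (sub_le_sub_left hpow 1) hD]

theorem expected_cost_monotone_in_reservation_utility_general
    (a c pr K B : ℝ) (ha : 0 < a) (hc : 0 < c) (hprK : pr ≤ K)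
    (pn : ℕ → ℝ) (hpn : ∀ n : ℕ, 0 ≤ pn n) (hsum : Summable pn)
    (q : ℝ → ℝ)
    (hq : ∀ e : ℝ, q e =
      (c * (pr - e)) * (1 - Real.exp (-a / (c * (pr - e)))) / a)
    (F : ℝ → ℝ)
    (hF : ∀ e : ℝ, F e = ∑' n : ℕ, pn n * ((1 - (1 - q e) ^ n) * (pr - K) + B)) :
    MonotoneOn F (Set.Iio pr) := by
  obtain rfl : q = acceptanceProb a c pr := funext hq
  obtain rfl : F = expectedCost pn (pr - K) B ∘ acceptanceProb a c pr := funext hF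
  exact (expectedCost_antitoneOn hpn hsum (sub_nonpos.2 hprK) B).comp
    (acceptanceProb_antitoneOn ha.le hc pr) fun _ he ↦ acceptanceProb_mem_Icc ha hc he

lemma poissonWeight_nonneg {μ : ℝ} (hμ : 0 ≤ μ) (n : ℕ) :
    0 ≤ μ ^ n * Real.exp (-μ) / n.factorial := by
  positivity

lemma summable_poissonWeight (μ : ℝ) :
    Summable fun n : ℕ ↦ μ ^ n * Real.exp (-μ) / n.factorial := by
  simpa only [div_mul_eq_mul_div] using
    (Real.summable_pow_div_factorial μ).mul_right (Real.exp (-μ))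

/-- Monotonicity of the expected energy cost in the reservation utility `ε`:
with acceptance probability `q(e) = φₐ(c(pr − e))/a` and Poisson weights
`pₙ = μⁿ e^{−μ}/n!`, the expected cost
`F̃(e) = Σₙ pₙ[(1 − (1 − q(e))ⁿ)(pr − K) + B]` is nondecreasing on `(−∞, pr)`. -/
theorem expected_cost_monotone_in_reservation_utility
    (a c pr K B μ : ℝ) (ha : 0 < a) (hc : 0 < c) (hprK : pr ≤ K) (hμ : 0 < μ)
    (pn : ℕ → ℝ) (hpn : ∀ n : ℕ, pn n = μ ^ n * Real.exp (-μ) / n.factorial)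
    (q : ℝ → ℝ)
    (hq : ∀ e : ℝ, q e =
      (c * (pr - e)) * (1 - Real.exp (-a / (c * (pr - e)))) / a)
    (F : ℝ → ℝ)
    (hF : ∀ e : ℝ, F e = ∑' n : ℕ, pn n * ((1 - (1 - q e) ^ n) * (pr - K) + B)) :
    MonotoneOn F (Set.Iio pr) := by
  obtain rfl : pn = _ := funext hpn
  exact expected_cost_monotone_in_reservation_utility_general a c pr K B ha hc hprK _
    (poissonWeight_nonneg hμ.le) (summable_poissonWeight μ) q hq F hF
end
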